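/- Let q ∈ ℋ_c, let q(+∞) = lim_{x→+∞} q(x) and q(−∞) = lim_{x→−∞} q(x), let f(x) = ψ(x)^{-1}∫_{−∞}^{x}(q(y) − Φ(q))ψ(y)dy and f¹(x) = ψ(x)^{-1}∫_{−∞}^{x}(y·q(y) − Φ(v·q(v)))ψ(y)dy. Then: (a) the map x ↦ x·f(x) is monotonically increasing on ℝ, with lim_{x→−∞} x·f(x) = Φ(q) − q(−∞) and lim_{x→+∞} x·f(x) = Φ(q) − q(+∞); (b) the map x ↦ f¹(x) is monotonically increasing on ℝ, with lim_{x→−∞} f¹(x) = −q(−∞) and lim_{x→+∞} f¹(x) = −q(+∞). -/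

import Mathlib

open MeasureTheory Filter

/-- Density of the standard normal distribution. -/
noncomputable def gaussD (x : ℝ) : ℝ := (Real.sqrt (2 * Real.pi))⁻¹ * Real.exp (-(x ^ 2) / 2)

/-- Expectation of `g` with respect to the standard normal distribution, `Φ(g)`. -/
noncomputable def PhiInt (g : ℝ → ℝ) : ℝ := ∫ x, g x * gaussD x

/-- The class `ℋ` of monotonically decreasing, left-continuous functions `ℝ → [0,1]`. -/
def memH (h : ℝ → ℝ) : Prop :=
  (∀ x, h x ∈ Set.Icc (0 : ℝ) 1) ∧ Antitone h ∧
    ∀ x, ContinuousWithinAt h (Set.Iic x) x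

/-- The class `ℋ_c` of members of `ℋ` that are continuous outside some compact interval. -/
def memHc (h : ℝ → ℝ) : Prop :=
  memH h ∧ ∃ K : ℝ, ContinuousOn h (Set.Icc (-K) K)ᶜ

/-- The Stein solution `f` for the function `q`. -/
noncomputable def steinF0 (q : ℝ → ℝ) (x : ℝ) : ℝ :=
  (gaussD x)⁻¹ * ∫ y in Set.Iic x, (q y - PhiInt q) * gaussD y

/-- The Stein solution `f¹` for the function `x·q(x)`. -/
noncomputable def steinF1 (q : ℝ → ℝ) (x : ℝ) : ℝ :=
  (gaussD x)⁻¹ * ∫ y in Set.Iic x, (y * q y - PhiInt (fun v => v * q v)) * gaussD y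

lemma gd_pos (x : ℝ) : 0 < gaussD x := by
  unfold gaussD; positivity

lemma gd_eq : gaussD = ProbabilityTheory.gaussianPDFReal 0 1 := by
  funext x; simp [gaussD, ProbabilityTheory.gaussianPDFReal]

lemma gd_int : Integrable gaussD := by
  rw [gd_eq]; exact ProbabilityTheory.integrable_gaussianPDFReal 0 1

lemma gd_total : ∫ x, gaussD x = 1 := by
  rw [gd_eq]; exact ProbabilityTheory.integral_gaussianPDFReal_eq_one 0 one_ne_zero

lemma gd_neg (x : ℝ) : gaussD (-x) = gaussD x := by simp [gaussD]

lemma gd_deriv (x : ℝ) : HasDerivAt gaussD (-(x * gaussD x)) x := by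
  unfold gaussD
  have h : HasDerivAt (fun x : ℝ => -(x ^ 2) / 2) (-x) x := by
    have := ((hasDerivAt_pow 2 x).neg).div_const 2
    refine this.congr_deriv ?_
    push_cast; ring
  have := (h.exp).const_mul (Real.sqrt (2 * Real.pi))⁻¹
  refine this.congr_deriv ?_
  ring

lemma gd_cont : Continuous gaussD :=
  continuous_iff_continuousAt.2 fun x => (gd_deriv x).continuousAt

lemma ygd_int : Integrable (fun y => y * gaussD y) := by
  have h := (integrable_mul_exp_neg_mul_sq (b := 1/2) (by norm_num)).const_mul
    (Real.sqrt (2 * Real.pi))⁻¹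
  refine h.congr (Eventually.of_forall fun x => ?_)
  simp only [gaussD]
  rw [show -(1/2 : ℝ) * x ^ 2 = -(x ^ 2) / 2 by ring]; ring

lemma gd_tendsto_top : Tendsto gaussD atTop (nhds 0) := by
  have h : Tendsto (fun x : ℝ => -(x ^ 2) / 2) atTop atBot := by
    apply Tendsto.atBot_div_const (by norm_num)
    exact tendsto_neg_atTop_atBot.comp (tendsto_pow_atTop two_ne_zero)
  have := (Real.tendsto_exp_atBot.comp h).const_mul (Real.sqrt (2 * Real.pi))⁻¹
  rw [mul_zero] at this
  exact this

lemma gd_tendsto_bot : Tendsto gaussD atBot (nhds 0) := by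
  have := gd_tendsto_top.comp tendsto_neg_atBot_atTop
  simpa [Function.comp_def, gd_neg] using this

lemma ygd_Iic (x : ℝ) : ∫ y in Set.Iic x, y * gaussD y = -gaussD x := by
  have := integral_Iic_of_hasDerivAt_of_tendsto' (a := x) (f := fun y => - gaussD y)
    (f' := fun y => y * gaussD y) (m := 0)
    (fun y _ => ((gd_deriv y).neg).congr_deriv (by ring)) ygd_int.integrableOn
    (by simpa using gd_tendsto_bot.neg)
  simpa using this

lemma ygd_Ioi (x : ℝ) : ∫ y in Set.Ioi x, y * gaussD y = gaussD x := by
  have := integral_Ioi_of_hasDerivAt_of_tendsto' (a := x) (f := fun y => - gaussD y)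
    (f' := fun y => y * gaussD y) (m := 0)
    (fun y _ => ((gd_deriv y).neg).congr_deriv (by ring)) ygd_int.integrableOn
    (by simpa using gd_tendsto_top.neg)
  simpa using this

lemma split_int {u : ℝ → ℝ} (hu : Integrable u) (x : ℝ) :
    (∫ y in Set.Iic x, u y) + (∫ y in Set.Ioi x, u y) = ∫ y, u y := by
  have := integral_add_compl (measurableSet_Iic (a := x)) hu
  simpa [Set.compl_Iic] using this

lemma ygd_total : ∫ y, y * gaussD y = 0 := by
  rw [← split_int ygd_int 0, ygd_Iic, ygd_Ioi]; ring

/-- The distribution function. -/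
noncomputable def gP (x : ℝ) : ℝ := ∫ y in Set.Iic x, gaussD y

lemma gP_add_Ioi (x : ℝ) : gP x + (∫ y in Set.Ioi x, gaussD y) = 1 := by
  rw [gP, split_int gd_int, gd_total]

lemma gP_neg (x : ℝ) : gP (-x) = ∫ y in Set.Ioi x, gaussD y := by
  have := integral_comp_neg_Iic (-x) gaussD
  simpa [gd_neg, gP] using this

lemma gP_add_neg (x : ℝ) : gP x + gP (-x) = 1 := by rw [gP_neg, gP_add_Ioi]

lemma gP_nonneg (x : ℝ) : 0 ≤ gP x :=
  integral_nonneg fun y => (gd_pos y).le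

lemma gP_deriv (x : ℝ) : HasDerivAt gP (gaussD x) x := by
  have h : gP = fun x => gP 0 + ∫ y in (0:ℝ)..x, gaussD y := by
    funext x
    have := intervalIntegral.integral_Iic_sub_Iic (a := 0) (b := x) (μ := volume)
      gd_int.integrableOn gd_int.integrableOn
    unfold gP
    linarith
  rw [h]
  exact (intervalIntegral.integral_hasDerivAt_right (gd_cont.intervalIntegrable _ _)
    (gd_cont.stronglyMeasurableAtFilter _ _) gd_cont.continuousAt).const_add _

/-- Upper Mills bound. -/
lemma mills_up (x : ℝ) : 0 ≤ gaussD x + x * gP x := by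
  have h : ∫ y in Set.Iic x, (x - y) * gaussD y = gaussD x + x * gP x := by
    have : ∀ y, (x - y) * gaussD y = x * gaussD y - y * gaussD y := fun y => by ring
    simp_rw [this]
    rw [integral_sub (gd_int.const_mul x).integrableOn ygd_int.integrableOn, ygd_Iic,
      integral_const_mul, gP]
    ring
  rw [← h]
  refine setIntegral_nonneg measurableSet_Iic fun y hy => ?_
  exact mul_nonneg (sub_nonneg.2 hy) (gd_pos y).le

lemma gP_tendsto_bot : Tendsto gP atBot (nhds 0) := by
  refine tendsto_of_tendsto_of_tendsto_of_le_of_le' tendsto_const_nhds gd_tendsto_bot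
    (Eventually.of_forall gP_nonneg) ?_
  filter_upwards [eventually_le_atBot (-1)] with x hx
  nlinarith [mills_up x, gP_nonneg x]

/-- Lower Mills bound. -/
lemma mills_low (x : ℝ) : 0 ≤ (1 + x ^ 2) * gP x + x * gaussD x := by
  have hd : ∀ x, HasDerivAt (fun x => gP x + x * gaussD x / (1 + x ^ 2))
      (2 * gaussD x / (1 + x ^ 2) ^ 2) x := by
    intro x
    have hp : (1 + x ^ 2) ≠ 0 := by positivity
    have h2 : HasDerivAt (fun x : ℝ => 1 + x ^ 2) (2 * x) x := by
      simpa using (hasDerivAt_pow 2 x).const_add 1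
    have := (gP_deriv x).add ((((hasDerivAt_id x).mul (gd_deriv x))).div h2 hp)
    refine this.congr_deriv ?_
    simp only [id, Pi.mul_apply]
    field_simp
    ring
  have hm : Monotone (fun x => gP x + x * gaussD x / (1 + x ^ 2)) := by
    apply monotone_of_deriv_nonneg (fun x => (hd x).differentiableAt)
    intro x; rw [(hd x).deriv]; have := gd_pos x; positivity
  have hl : Tendsto (fun x => gP x + x * gaussD x / (1 + x ^ 2)) atBot (nhds 0) := by
    have : Tendsto (fun x : ℝ => x * gaussD x / (1 + x ^ 2)) atBot (nhds 0) := by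
      refine squeeze_zero_norm (fun x => ?_) gd_tendsto_bot
      rw [Real.norm_eq_abs, abs_div, abs_mul, abs_of_pos (gd_pos x),
        abs_of_pos (show 0 < 1 + x ^ 2 by positivity), div_le_iff₀ (by positivity)]
      have := gd_pos x
      have : |x| ≤ 1 + x ^ 2 := by
        rw [abs_le]; constructor <;> nlinarith [sq_nonneg (x + 1), sq_nonneg (x - 1)]
      nlinarith
    simpa using gP_tendsto_bot.add this
  have h0 := hm.le_of_tendsto hl x
  have hp : 0 < (1 + x ^ 2) := by positivity
  have h1 := mul_nonneg hp.le h0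
  have : (1 + x ^ 2) * (gP x + x * gaussD x / (1 + x ^ 2))
    = (1 + x ^ 2) * gP x + x * gaussD x := by field_simp
  linarith

/-- Mills ratio. -/
noncomputable def gM (x : ℝ) : ℝ := (gaussD x)⁻¹ * gP x

lemma gM_deriv (x : ℝ) : HasDerivAt gM (1 + x * gM x) x := by
  have hne := (gd_pos x).ne'
  have := ((gd_deriv x).inv hne).mul (gP_deriv x)
  refine this.congr_deriv ?_
  simp only [gM, Pi.inv_apply]
  field_simp
  ring

lemma gM_mono : Monotone gM := by
  apply monotone_of_deriv_nonneg (fun x => (gM_deriv x).differentiableAt)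
  intro x
  rw [(gM_deriv x).deriv]
  have h := mul_nonneg (inv_nonneg.2 (gd_pos x).le) (mills_up x)
  have hne := (gd_pos x).ne'
  have : (gaussD x)⁻¹ * (gaussD x + x * gP x) = 1 + x * gM x := by
    unfold gM; field_simp
  linarith

lemma xgM_mono : Monotone (fun x => x * gM x) := by
  have hd : ∀ x, HasDerivAt (fun x => x * gM x) (gM x + x * (1 + x * gM x)) x := by
    intro x
    exact ((hasDerivAt_id x).mul (gM_deriv x)).congr_deriv (by simp)
  apply monotone_of_deriv_nonneg (fun x => (hd x).differentiableAt)
  intro x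
  rw [(hd x).deriv]
  have h := mul_nonneg (inv_nonneg.2 (gd_pos x).le) (mills_low x)
  have hne := (gd_pos x).ne'
  have : (gaussD x)⁻¹ * ((1 + x ^ 2) * gP x + x * gaussD x) = gM x + x * (1 + x * gM x) := by
    unfold gM; field_simp; ring
  linarith

lemma gM_nonneg (x : ℝ) : 0 ≤ gM x := mul_nonneg (inv_nonneg.2 (gd_pos x).le) (gP_nonneg x)

lemma xgM_lower (x : ℝ) : -1 ≤ x * gM x := by
  have h := mul_nonneg (inv_nonneg.2 (gd_pos x).le) (mills_up x)
  have hne := (gd_pos x).ne'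
  have : (gaussD x)⁻¹ * (gaussD x + x * gP x) = 1 + x * gM x := by
    unfold gM; field_simp
  linarith

lemma gM_bot : Tendsto gM atBot (nhds 0) := by
  have h : Tendsto (fun x : ℝ => -x⁻¹) atBot (nhds 0) := by
    simpa using (tendsto_inv_atBot_zero (𝕜 := ℝ)).neg
  refine tendsto_of_tendsto_of_tendsto_of_le_of_le' tendsto_const_nhds h
    (Eventually.of_forall gM_nonneg) ?_
  filter_upwards [eventually_lt_atBot 0] with x hx
  have h1 := xgM_lower x
  rw [← inv_neg, ← one_div, le_div_iff₀ (by linarith)]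
  linarith

lemma xgM_bot : Tendsto (fun x => x * gM x) atBot (nhds (-1)) := by
  have h : Tendsto (fun x => - 1 + x⁻¹ * x⁻¹ : ℝ → ℝ) atBot (nhds (-1)) := by
    simpa using (tendsto_inv_atBot_zero.mul tendsto_inv_atBot_zero).const_add (-1 : ℝ)
  refine tendsto_of_tendsto_of_tendsto_of_le_of_le' tendsto_const_nhds h
    (Eventually.of_forall xgM_lower) ?_
  filter_upwards [eventually_lt_atBot 0] with x hx
  have h := mul_nonneg (inv_nonneg.2 (gd_pos x).le) (mills_low x)
  have hne := (gd_pos x).ne'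
  have e : (gaussD x)⁻¹ * ((1 + x ^ 2) * gP x + x * gaussD x) = gM x + x * (1 + x * gM x) := by
    unfold gM; field_simp; ring
  rw [e] at h
  -- multiply by 1/x and use x*gM ≥ -1
  have h1 := xgM_lower x
  have hx0 : x ≠ 0 := hx.ne
  have hx2 : 0 < x ^ 2 := by positivity
  have h3 : x ^ 2 * (x * gM x) ≤ x ^ 2 * (-1 + x⁻¹ * x⁻¹) := by
    have : x ^ 2 * (-1 + x⁻¹ * x⁻¹) = - x ^ 2 + 1 := by field_simp
    rw [this]
    nlinarith
  exact le_of_mul_le_mul_left h3 hx2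

/-- Layer-cake positivity lemma. -/
lemma layer {k q : ℝ → ℝ} (hk : Integrable k) (h1 : ∀ t, 0 ≤ ∫ y in Set.Iic t, k y)
    (h2 : 0 ≤ ∫ y, k y) (hq : Antitone q) (hq01 : ∀ x, q x ∈ Set.Icc (0 : ℝ) 1) :
    0 ≤ ∫ y, q y * k y := by
  set ν : Measure ℝ := volume.restrict (Set.Ioc (0:ℝ) 1) with hν
  set F : ℝ → ℝ → ℝ := fun y s => (if s ≤ q y then 1 else 0) * k y with hF
  have hqm : Measurable q := hq.measurable
  have hFi : Integrable (Function.uncurry F) (volume.prod ν) := by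
    have hi : Integrable (fun z : ℝ × ℝ => k z.1) (volume.prod ν) := hk.comp_fst ν
    refine hi.bdd_mul (f := fun z : ℝ × ℝ => if z.2 ≤ q z.1 then (1:ℝ) else 0) (c := 1) ?_ ?_
    · apply Measurable.aestronglyMeasurable
      exact Measurable.ite (measurableSet_le measurable_snd (hqm.comp measurable_fst))
        measurable_const measurable_const
    · refine Eventually.of_forall fun z => ?_
      split_ifs <;> simp
  have hsw := integral_integral_swap hFi
  have hL : ∀ y, ∫ s, F y s ∂ν = q y * k y := by
    intro y
    simp only [hF]
    rw [integral_mul_const]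
    congr 1
    have e : (fun s : ℝ => if s ≤ q y then (1:ℝ) else 0) =
        (Set.Iic (q y)).indicator (fun _ => 1) := by
      funext s; simp [Set.indicator]
    rw [e, integral_indicator measurableSet_Iic, hν,
      Measure.restrict_restrict measurableSet_Iic]
    have e2 : Set.Iic (q y) ∩ Set.Ioc 0 1 = Set.Ioc 0 (q y) := by
      ext s; simp only [Set.mem_inter_iff, Set.mem_Iic, Set.mem_Ioc]
      have := (hq01 y).2
      constructor
      · rintro ⟨a, b, c⟩; exact ⟨b, a⟩
      · rintro ⟨a, b⟩; exact ⟨b, a, b.trans this⟩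
    rw [e2]
    simp [(hq01 y).1]
  simp_rw [hL] at hsw
  rw [hsw]
  refine integral_nonneg fun s => ?_
  set L : Set ℝ := {y | s ≤ q y} with hLdef
  have hLm : MeasurableSet L := measurableSet_le measurable_const hqm
  have e : (fun y => F y s) = L.indicator k := by
    funext y; simp [hF, hLdef, Set.indicator]
  show 0 ≤ ∫ y, F y s
  rw [e, integral_indicator hLm]
  have hlow : ∀ a b, a ≤ b → b ∈ L → a ∈ L := fun a b hab hb => le_trans hb (hq hab)
  rcases L.eq_empty_or_nonempty with h | hne
  · simp [h]
  by_cases hb : BddAbove L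
  · have : L =ᵐ[volume] Set.Iic (sSup L) := by
      have hs : L ⊆ Set.Iic (sSup L) := fun y hy => le_csSup hb hy
      have hs2 : Set.Iio (sSup L) ⊆ L := fun y hy => by
        obtain ⟨z, hz, hyz⟩ := exists_lt_of_lt_csSup hne hy
        exact hlow _ _ hyz.le hz
      exact Filter.EventuallyLE.antisymm (LE.le.eventuallyLE hs)
        (Iio_ae_eq_Iic.symm.le.trans (LE.le.eventuallyLE hs2))
    rw [setIntegral_congr_set this]
    exact h1 _
  · have : L = Set.univ := by
      ext y
      simp only [Set.mem_univ, iff_true]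
      obtain ⟨z, hz, hyz⟩ := not_bddAbove_iff.1 hb y
      exact hlow _ _ hyz.le hz
    rw [this]; simpa using h2

lemma q_int {q w : ℝ → ℝ} (hw : Integrable w) (hq : Antitone q)
    (hq01 : ∀ x, q x ∈ Set.Icc (0 : ℝ) 1) : Integrable (fun y => q y * w y) := by
  refine hw.bdd_mul (c := 1) hq.measurable.aestronglyMeasurable (Eventually.of_forall fun x => ?_)
  rw [Real.norm_eq_abs, abs_of_nonneg (hq01 x).1]; exact (hq01 x).2

/-- Stein kernel. -/
noncomputable def kk (w : ℝ → ℝ) (x y : ℝ) : ℝ :=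
  (gaussD x)⁻¹ * ((Set.Iic x).indicator w y - gP x * w y)

lemma kk_int {w : ℝ → ℝ} (hw : Integrable w) (x : ℝ) : Integrable (kk w x) :=
  ((hw.indicator measurableSet_Iic).sub (hw.const_mul _)).const_mul _

lemma kk_total {w : ℝ → ℝ} (hw : Integrable w) (x : ℝ) :
    ∫ y, kk w x y = (gaussD x)⁻¹ * ((∫ y in Set.Iic x, w y) - gP x * ∫ y, w y) := by
  unfold kk
  rw [integral_const_mul, integral_sub (hw.indicator measurableSet_Iic) (hw.const_mul _),
    integral_const_mul, integral_indicator measurableSet_Iic]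

lemma kk_Iic {w : ℝ → ℝ} (hw : Integrable w) (x t : ℝ) :
    ∫ y in Set.Iic t, kk w x y =
      (gaussD x)⁻¹ * ((∫ y in Set.Iic (min t x), w y) - gP x * ∫ y in Set.Iic t, w y) := by
  unfold kk
  rw [integral_const_mul, integral_sub (hw.indicator measurableSet_Iic).integrableOn
    (hw.const_mul _).integrableOn, integral_const_mul, setIntegral_indicator measurableSet_Iic,
    Set.Iic_inter_Iic]

lemma kk_q {q w : ℝ → ℝ} (hw : Integrable w) (hq : Antitone q)
    (hq01 : ∀ x, q x ∈ Set.Icc (0 : ℝ) 1) (x : ℝ) :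
    ∫ y, q y * kk w x y =
      (gaussD x)⁻¹ * ((∫ y in Set.Iic x, q y * w y) - gP x * ∫ y, q y * w y) := by
  rw [← kk_total (q_int hw hq hq01)]
  congr 1; funext y
  unfold kk
  by_cases h : y ∈ Set.Iic x
  · simp only [Set.indicator_of_mem h]; ring
  · simp only [Set.indicator_of_notMem h]; ring

lemma mono_gen {q w : ℝ → ℝ} (c : ℝ → ℝ) (hw : Integrable w) (hq : Antitone q)
    (hq01 : ∀ x, q x ∈ Set.Icc (0 : ℝ) 1)
    (h1 : ∀ t, Monotone fun x => c x * ((gaussD x)⁻¹ *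
      ((∫ y in Set.Iic (min t x), w y) - gP x * ∫ y in Set.Iic t, w y)))
    (h2 : Monotone fun x => c x * ((gaussD x)⁻¹ * ((∫ y in Set.Iic x, w y) - gP x * ∫ y, w y))) :
    Monotone fun x => c x * ((gaussD x)⁻¹ *
      ((∫ y in Set.Iic x, q y * w y) - gP x * ∫ y, q y * w y)) := by
  intro a b hab
  have hi : ∀ x, Integrable (fun y => c x * kk w x y) := fun x => (kk_int hw x).const_mul _
  have key := layer (k := fun y => c b * kk w b y - c a * kk w a y) (q := q)
    ((hi b).sub (hi a)) ?_ ?_ hq hq01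
  · have hqi : ∀ x, Integrable (fun y => q y * kk w x y) := fun x => q_int (kk_int hw x) hq hq01
    have e : ∀ y, q y * (c b * kk w b y - c a * kk w a y) =
        c b * (q y * kk w b y) - c a * (q y * kk w a y) := fun y => by ring
    simp_rw [e] at key
    rw [integral_sub ((hqi b).const_mul _) ((hqi a).const_mul _), integral_const_mul,
      integral_const_mul, kk_q hw hq hq01, kk_q hw hq hq01] at key
    exact sub_nonneg.1 key
  · intro t
    rw [integral_sub (hi b).integrableOn (hi a).integrableOn, integral_const_mul,
      integral_const_mul, kk_Iic hw, kk_Iic hw]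
    exact sub_nonneg.2 (h1 t hab)
  · rw [integral_sub (hi b) (hi a), integral_const_mul,
      integral_const_mul, kk_total hw, kk_total hw]
    exact sub_nonneg.2 (h2 hab)

lemma F0_eq {q : ℝ → ℝ} (hq : Antitone q) (hq01 : ∀ x, q x ∈ Set.Icc (0 : ℝ) 1) (x : ℝ) :
    steinF0 q x = (gaussD x)⁻¹ *
      ((∫ y in Set.Iic x, q y * gaussD y) - gP x * ∫ y, q y * gaussD y) := by
  unfold steinF0 PhiInt
  simp_rw [sub_mul]
  rw [integral_sub (q_int gd_int hq hq01).integrableOn (gd_int.const_mul _).integrableOn,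
    integral_const_mul, gP]
  ring

lemma F1_eq {q : ℝ → ℝ} (hq : Antitone q) (hq01 : ∀ x, q x ∈ Set.Icc (0 : ℝ) 1) (x : ℝ) :
    steinF1 q x = (gaussD x)⁻¹ *
      ((∫ y in Set.Iic x, q y * (y * gaussD y)) - gP x * ∫ y, q y * (y * gaussD y)) := by
  unfold steinF1 PhiInt
  have e : ∀ y, y * q y * gaussD y = q y * (y * gaussD y) := fun y => by ring
  simp_rw [sub_mul, e]
  rw [integral_sub (q_int ygd_int hq hq01).integrableOn (gd_int.const_mul _).integrableOn,
    integral_const_mul, gP]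
  ring

lemma mono0 {q : ℝ → ℝ} (hq : Antitone q) (hq01 : ∀ x, q x ∈ Set.Icc (0 : ℝ) 1) :
    Monotone fun x => x * steinF0 q x := by
  simp_rw [F0_eq hq hq01]
  refine mono_gen (fun x => x) gd_int hq hq01 (fun t => ?_) ?_
  · refine MonotoneOn.Iic_union_Ici (a := t) ?_ ?_
    · intro a ha b hb hab
      have ha' : a ≤ t := ha
      have hb' : b ≤ t := hb
      simp only [min_eq_right ha', min_eq_right hb']
      have e : ∀ x, x * ((gaussD x)⁻¹ * ((∫ y in Set.Iic x, gaussD y)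
          - gP x * ∫ y in Set.Iic t, gaussD y)) = (x * gM x) * gP (-t) := by
        intro x
        have : gP (-t) = 1 - gP t := by linarith [gP_add_neg t]
        rw [this]; unfold gM; simp only [gP]; ring
      rw [e, e]
      exact mul_le_mul_of_nonneg_right (xgM_mono hab) (gP_nonneg _)
    · intro a ha b hb hab
      have ha' : t ≤ a := ha
      have hb' : t ≤ b := hb
      simp only [min_eq_left ha', min_eq_left hb']
      have e : ∀ x, x * ((gaussD x)⁻¹ * ((∫ y in Set.Iic t, gaussD y)
          - gP x * ∫ y in Set.Iic t, gaussD y)) = -((-x) * gM (-x)) * gP t := by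
        intro x
        have : gP (-x) = 1 - gP x := by linarith [gP_add_neg x]
        unfold gM
        rw [this, gd_neg]; simp only [gP]; ring
      rw [e, e]
      exact mul_le_mul_of_nonneg_right (neg_le_neg (xgM_mono (neg_le_neg hab))) (gP_nonneg _)
  · have e : ∀ x, x * ((gaussD x)⁻¹ * ((∫ y in Set.Iic x, gaussD y)
          - gP x * ∫ y, gaussD y)) = 0 := by
      intro x; rw [gd_total]; simp only [gP]; ring
    simp_rw [e]
    exact monotone_const

lemma mono1 {q : ℝ → ℝ} (hq : Antitone q) (hq01 : ∀ x, q x ∈ Set.Icc (0 : ℝ) 1) :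
    Monotone (steinF1 q) := by
  have := mono_gen (q := q) (w := fun y => y * gaussD y) (fun _ => 1) ygd_int hq hq01
    (fun t => ?_) ?_
  · simp only [one_mul] at this
    have e : steinF1 q = _ := funext (F1_eq hq hq01)
    rw [e]; exact this
  · simp only [ygd_Iic, one_mul]
    refine MonotoneOn.Iic_union_Ici (a := t) ?_ ?_
    · intro a ha b hb hab
      have ha' : a ≤ t := ha
      have hb' : b ≤ t := hb
      simp only [min_eq_right ha', min_eq_right hb']
      have e : ∀ x, (gaussD x)⁻¹ * (-gaussD x - gP x * -gaussD t) = -1 + gaussD t * gM x := by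
        intro x
        have := (gd_pos x).ne'
        unfold gM; field_simp; ring
      rw [e, e]
      have := mul_le_mul_of_nonneg_left (gM_mono hab) (gd_pos t).le
      linarith
    · intro a ha b hb hab
      have ha' : t ≤ a := ha
      have hb' : t ≤ b := hb
      simp only [min_eq_left ha', min_eq_left hb']
      have e : ∀ x, (gaussD x)⁻¹ * (-gaussD t - gP x * -gaussD t) = -(gaussD t * gM (-x)) := by
        intro x
        have : gP (-x) = 1 - gP x := by linarith [gP_add_neg x]
        unfold gM
        rw [this, gd_neg]; ring
      rw [e, e]
      exact neg_le_neg (mul_le_mul_of_nonneg_left (gM_mono (neg_le_neg hab)) (gd_pos t).le)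
  · simp only [ygd_Iic, one_mul, ygd_total]
    have e : ∀ x, (gaussD x)⁻¹ * (-gaussD x - gP x * 0) = -1 := by
      intro x
      have := (gd_pos x).ne'
      field_simp; ring
    simp_rw [e]
    exact monotone_const

/-- Bounds of a weighted integral by monotonicity. -/
lemma wbound {q w : ℝ → ℝ} {s : Set ℝ} (hs : MeasurableSet s) {lo hi : ℝ} (hw : Integrable w)
    (hqi : Integrable fun y => q y * w y) (hw0 : ∀ y ∈ s, 0 ≤ w y)
    (hl : ∀ y ∈ s, lo ≤ q y) (hh : ∀ y ∈ s, q y ≤ hi) :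
    lo * (∫ y in s, w y) ≤ ∫ y in s, q y * w y ∧
    ∫ y in s, q y * w y ≤ hi * ∫ y in s, w y := by
  constructor
  · rw [← integral_const_mul]
    exact setIntegral_mono_on (hw.const_mul _).integrableOn hqi.integrableOn hs
      fun y hy => mul_le_mul_of_nonneg_right (hl y hy) (hw0 y hy)
  · rw [← integral_const_mul]
    exact setIntegral_mono_on hqi.integrableOn (hw.const_mul _).integrableOn hs
      fun y hy => mul_le_mul_of_nonneg_right (hh y hy) (hw0 y hy)

lemma gP_pos (x : ℝ) : 0 < gP x := by
  refine lt_of_le_of_ne (gP_nonneg x) fun h => ?_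
  have hx := mills_low x
  -- use strict growth through the derivative
  have hmono : Monotone gP := monotone_of_deriv_nonneg (fun x => (gP_deriv x).differentiableAt)
    fun x => by rw [(gP_deriv x).deriv]; exact (gd_pos x).le
  have h1 : gP (min x 0 - 1) ≤ 0 := (hmono (by linarith [min_le_left x 0])).trans h.symm.le
  have h2 := le_antisymm h1 (gP_nonneg _)
  have h3 := mills_low (min x 0 - 1)
  rw [h2] at h3
  nlinarith [gd_pos (min x 0 - 1), min_le_right x 0]

lemma lim0_bot {q : ℝ → ℝ} (hq : Antitone q) (hq01 : ∀ x, q x ∈ Set.Icc (0 : ℝ) 1) {qm : ℝ}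
    (hqm : Tendsto q atBot (nhds qm)) :
    Tendsto (fun x => x * steinF0 q x) atBot (nhds (PhiInt q - qm)) := by
  have hb : ∀ x, q x * gP x ≤ ∫ y in Set.Iic x, q y * gaussD y ∧
      ∫ y in Set.Iic x, q y * gaussD y ≤ qm * gP x := fun x =>
    wbound measurableSet_Iic gd_int (q_int gd_int hq hq01) (fun y _ => (gd_pos y).le)
      (fun y hy => hq hy) (fun y _ => hq.ge_of_tendsto hqm y)
  have hav : Tendsto (fun x => (∫ y in Set.Iic x, q y * gaussD y) / gP x) atBot (nhds qm) :=
    tendsto_of_tendsto_of_tendsto_of_le_of_le hqm tendsto_const_nhds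
      (fun x => (le_div_iff₀ (gP_pos x)).2 (hb x).1)
      (fun x => (div_le_iff₀ (gP_pos x)).2 (hb x).2)
  have := xgM_bot.mul (hav.sub_const (PhiInt q))
  rw [show -1 * (qm - PhiInt q) = PhiInt q - qm by ring] at this
  refine this.congr fun x => ?_
  rw [F0_eq hq hq01]
  have := (gP_pos x).ne'
  unfold gM PhiInt
  field_simp

lemma lim0_top {q : ℝ → ℝ} (hq : Antitone q) (hq01 : ∀ x, q x ∈ Set.Icc (0 : ℝ) 1) {qp : ℝ}
    (hqp : Tendsto q atTop (nhds qp)) :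
    Tendsto (fun x => x * steinF0 q x) atTop (nhds (PhiInt q - qp)) := by
  have hb : ∀ x, qp * gP (-x) ≤ ∫ y in Set.Ioi x, q y * gaussD y ∧
      ∫ y in Set.Ioi x, q y * gaussD y ≤ q x * gP (-x) := fun x => by
    rw [gP_neg]
    exact wbound measurableSet_Ioi gd_int (q_int gd_int hq hq01) (fun y _ => (gd_pos y).le)
      (fun y _ => hq.le_of_tendsto hqp y) (fun y hy => hq (le_of_lt hy))
  have hav : Tendsto (fun x => (∫ y in Set.Ioi x, q y * gaussD y) / gP (-x)) atTop (nhds qp) :=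
    tendsto_of_tendsto_of_tendsto_of_le_of_le tendsto_const_nhds hqp
      (fun x => (le_div_iff₀ (gP_pos _)).2 (hb x).1)
      (fun x => (div_le_iff₀ (gP_pos _)).2 (hb x).2)
  have := (xgM_bot.comp tendsto_neg_atTop_atBot).mul (hav.sub_const (PhiInt q))
  rw [show -1 * (qp - PhiInt q) = PhiInt q - qp by ring] at this
  refine this.congr fun x => ?_
  rw [F0_eq hq hq01]
  have h1 := split_int (q_int gd_int hq hq01) x
  have h2 : gP x = 1 - gP (-x) := by linarith [gP_add_neg x]
  have := (gP_pos (-x)).ne'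
  have h3 : ∫ y in Set.Iic x, q y * gaussD y =
      PhiInt q - ∫ y in Set.Ioi x, q y * gaussD y := by unfold PhiInt; linarith
  have h4 : ∫ y, q y * gaussD y = PhiInt q := rfl
  rw [h3, h4, h2]
  simp only [Function.comp_apply, gM, gd_neg]
  field_simp
  ring

lemma lim1_bot {q : ℝ → ℝ} (hq : Antitone q) (hq01 : ∀ x, q x ∈ Set.Icc (0 : ℝ) 1) {qm : ℝ}
    (hqm : Tendsto q atBot (nhds qm)) :
    Tendsto (steinF1 q) atBot (nhds (-qm)) := by
  have hb : ∀ x ≤ 0, q x * gaussD x ≤ -(∫ y in Set.Iic x, q y * (y * gaussD y)) ∧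
      -(∫ y in Set.Iic x, q y * (y * gaussD y)) ≤ qm * gaussD x := fun x hx => by
    have := wbound (q := q) (w := fun y => -(y * gaussD y)) (measurableSet_Iic (a := x))
      (lo := q x) (hi := qm) ygd_int.neg
      (q_int ygd_int.neg hq hq01)
      (fun y hy => by
        have hy' : y ≤ 0 := le_trans hy hx
        have := gd_pos y
        nlinarith)
      (fun y hy => hq hy) (fun y _ => hq.ge_of_tendsto hqm y)
    simpa [integral_neg, ygd_Iic] using this
  have hav : Tendsto (fun x => -(∫ y in Set.Iic x, q y * (y * gaussD y)) / gaussD x) atBot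
      (nhds qm) := by
    refine tendsto_of_tendsto_of_tendsto_of_le_of_le' hqm tendsto_const_nhds ?_ ?_
    · filter_upwards [eventually_le_atBot 0] with x hx
      exact (le_div_iff₀ (gd_pos x)).2 (hb x hx).1
    · filter_upwards [eventually_le_atBot 0] with x hx
      exact (div_le_iff₀ (gd_pos x)).2 (hb x hx).2
  have := hav.neg.sub (gM_bot.mul_const (∫ y, q y * (y * gaussD y)))
  rw [zero_mul, sub_zero] at this
  refine this.congr fun x => ?_
  rw [F1_eq hq hq01]
  have := (gd_pos x).ne'
  unfold gM
  field_simp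

lemma lim1_top {q : ℝ → ℝ} (hq : Antitone q) (hq01 : ∀ x, q x ∈ Set.Icc (0 : ℝ) 1) {qp : ℝ}
    (hqp : Tendsto q atTop (nhds qp)) :
    Tendsto (steinF1 q) atTop (nhds (-qp)) := by
  have hb : ∀ x ≥ 0, qp * gaussD x ≤ (∫ y in Set.Ioi x, q y * (y * gaussD y)) ∧
      (∫ y in Set.Ioi x, q y * (y * gaussD y)) ≤ q x * gaussD x := fun x hx => by
    have := wbound (q := q) (w := fun y => (y * gaussD y)) (measurableSet_Ioi (a := x))
      (lo := qp) (hi := q x) ygd_int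
      (q_int ygd_int hq hq01)
      (fun y hy => mul_nonneg (le_trans hx (le_of_lt hy)) (gd_pos y).le)
      (fun y _ => hq.le_of_tendsto hqp y) (fun y hy => hq (le_of_lt hy))
    simpa [ygd_Ioi] using this
  have hav : Tendsto (fun x => (∫ y in Set.Ioi x, q y * (y * gaussD y)) / gaussD x) atTop
      (nhds qp) := by
    refine tendsto_of_tendsto_of_tendsto_of_le_of_le' tendsto_const_nhds hqp ?_ ?_
    · filter_upwards [eventually_ge_atTop 0] with x hx
      exact (le_div_iff₀ (gd_pos x)).2 (hb x hx).1
    · filter_upwards [eventually_ge_atTop 0] with x hx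
      exact (div_le_iff₀ (gd_pos x)).2 (hb x hx).2
  have := hav.neg.add ((gM_bot.comp tendsto_neg_atTop_atBot).mul_const
    (∫ y, q y * (y * gaussD y)))
  rw [zero_mul, add_zero] at this
  refine this.congr fun x => ?_
  rw [F1_eq hq hq01]
  have h1 := split_int (q_int ygd_int hq hq01) x
  have h2 : gP x = 1 - gP (-x) := by linarith [gP_add_neg x]
  have h3 : ∫ y in Set.Iic x, q y * (y * gaussD y) =
      (∫ y, q y * (y * gaussD y)) - ∫ y in Set.Ioi x, q y * (y * gaussD y) := by linarith
  have := (gd_pos x).ne'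
  rw [h3, h2]
  simp only [Function.comp_apply, gM, gd_neg]
  field_simp
  ring

/-- for `q ∈ ℋ_c` with limits `qp` at `+∞` and `qm` at `−∞`,
the maps `x ↦ x·f(x)` and `x ↦ f¹(x)` are monotonically increasing with the stated limits. -/
theorem stein_solution_monotone_limits (q : ℝ → ℝ) (hq : memHc q) (qp qm : ℝ)
    (hqp : Tendsto q atTop (nhds qp)) (hqm : Tendsto q atBot (nhds qm)) :
    (Monotone (fun x => x * steinF0 q x) ∧
      Tendsto (fun x => x * steinF0 q x) atBot (nhds (PhiInt q - qm)) ∧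
      Tendsto (fun x => x * steinF0 q x) atTop (nhds (PhiInt q - qp))) ∧
    (Monotone (steinF1 q) ∧
      Tendsto (steinF1 q) atBot (nhds (-qm)) ∧
      Tendsto (steinF1 q) atTop (nhds (-qp))) := by
  obtain ⟨⟨hq01, hanti, -⟩, -⟩ := hq
  exact ⟨⟨mono0 hanti hq01, lim0_bot hanti hq01 hqm, lim0_top hanti hq01 hqp⟩,
    mono1 hanti hq01, lim1_bot hanti hq01 hqm, lim1_top hanti hq01 hqp⟩
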